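/- For all integers m ≥ 1 and n ≥ 1, p^{ed}_{od}(m,n) - p^{ed}_{od}(m,n-1) = D_e(m,n-1) + D_e(m-1,n-1) - D_o(m,n-1) (an identity of integers, with the convention D_e(0,k) = 1 if k = 0 and D_e(0,k) = 0 if k ≥ 1). -/

import Mathlib

/-- Number of partitions of `n` into exactly `m` distinct parts in which
every odd part is smaller than every even part and at least one odd part occurs. -/
noncomputable def pedOd (m n : ℕ) : ℕ :=
  Nat.card {π : n.Partition // π.parts.Nodup ∧ Multiset.card π.parts = m ∧
    (∀ a ∈ π.parts, ∀ b ∈ π.parts, Odd a → Even b → a < b) ∧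
    (∃ a ∈ π.parts, Odd a)}

/-- Number of partitions of `n` into exactly `m` distinct odd parts. -/
noncomputable def Dodd (m n : ℕ) : ℕ :=
  Nat.card {π : n.Partition // π.parts.Nodup ∧ Multiset.card π.parts = m ∧
    ∀ a ∈ π.parts, Odd a}

/-- Number of partitions of `n` into exactly `m` distinct even parts.
(For `m = 0` this is `1` when `n = 0` and `0` when `n ≥ 1`.) -/
noncomputable def Deven (m n : ℕ) : ℕ :=
  Nat.card {π : n.Partition // π.parts.Nodup ∧ Multiset.card π.parts = m ∧
    ∀ a ∈ π.parts, Even a}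

open Classical in
/-- Finite sets of naturals with given sum. -/
noncomputable def UU (n : ℕ) : Finset (Finset ℕ) :=
  (Finset.range (n + 1)).powerset.filter (fun s => ∑ x ∈ s, x = n)

lemma mem_UU (n : ℕ) (s : Finset ℕ) : s ∈ UU n ↔ ∑ x ∈ s, x = n := by
  unfold UU
  simp only [Finset.mem_filter, Finset.mem_powerset, and_iff_right_iff_imp]
  intro h x hx
  have := Finset.single_le_sum (f := fun x : ℕ => x) (fun i _ => Nat.zero_le i) hx
  simp only [Finset.mem_range]
  omega

open Classical in
lemma card_part (n m : ℕ) (Q : (ℕ → Prop) → Prop) :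
    Nat.card {π : n.Partition // π.parts.Nodup ∧ Multiset.card π.parts = m ∧
      Q (fun a => a ∈ π.parts)} =
    ((UU n).filter (fun s => 0 ∉ s ∧ s.card = m ∧ Q (fun a => a ∈ s))).card := by
  rw [← Nat.card_eq_finsetCard]
  refine Nat.card_congr ⟨fun π => ⟨⟨π.1.parts, π.2.1⟩, ?_⟩,
    fun s => ⟨⟨s.1.val, ?_, ?_⟩, ?_⟩, ?_, ?_⟩
  · obtain ⟨π, h1, h2, h3⟩ := π
    rw [Finset.mem_filter, mem_UU]
    refine ⟨?_, ?_, h2, h3⟩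
    · have := π.parts_sum
      simpa [Finset.sum] using this
    · intro h0
      exact absurd (π.parts_pos h0) (lt_irrefl _)
  · intro i hi
    have := (Finset.mem_filter.1 s.2).2.1
    rcases Nat.eq_zero_or_pos i with h | h
    · subst h
      exact absurd hi this
    · exact h
  · have := (mem_UU _ _).1 (Finset.mem_filter.1 s.2).1
    rw [Finset.sum, Multiset.map_id'] at this
    exact this
  · have := (Finset.mem_filter.1 s.2).2
    exact ⟨s.1.nodup, this.2⟩
  · intro π
    rfl
  · intro s
    rfl

def OddSep (s : Finset ℕ) : Prop := ∀ a ∈ s, ∀ b ∈ s, Odd a → Even b → a < b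

open Classical in
noncomputable def topOdd (s : Finset ℕ) : ℕ := (s.filter Odd).sup id

lemma topOdd_eq {s : Finset ℕ} {a : ℕ} (ha : a ∈ s) (ho : Odd a)
    (h : ∀ b ∈ s, Odd b → b ≤ a) : topOdd s = a := by
  unfold topOdd
  apply le_antisymm
  · apply Finset.sup_le
    intro b hb
    rw [Finset.mem_filter] at hb
    exact h b hb.1 hb.2
  · exact Finset.le_sup (f := id) (Finset.mem_filter.2 ⟨ha, ho⟩)

lemma exists_top {s : Finset ℕ} (h : ∃ a ∈ s, Odd a) :
    ∃ a ∈ s, Odd a ∧ (∀ b ∈ s, Odd b → b ≤ a) := by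
  classical
  obtain ⟨a, ha, ho⟩ := h
  obtain ⟨c, hc, hm⟩ := Finset.exists_max_image (s.filter Odd) id
    ⟨a, Finset.mem_filter.2 ⟨ha, ho⟩⟩
  rw [Finset.mem_filter] at hc
  exact ⟨c, hc.1, hc.2, fun b hb hbo => hm b (Finset.mem_filter.2 ⟨hb, hbo⟩)⟩

noncomputable def botEven (s : Finset ℕ) : ℕ := sInf {x | x ∈ s ∧ Even x}

lemma botEven_eq {s : Finset ℕ} {a : ℕ} (ha : a ∈ s) (ho : Even a)
    (h : ∀ b ∈ s, Even b → a ≤ b) : botEven s = a := by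
  have : IsLeast {x | x ∈ s ∧ Even x} a := ⟨⟨ha, ho⟩, fun b hb => h b hb.1 hb.2⟩
  exact this.csInf_eq

lemma exists_bot {s : Finset ℕ} (h : ∃ a ∈ s, Even a) :
    ∃ a ∈ s, Even a ∧ (∀ b ∈ s, Even b → a ≤ b) := by
  classical
  obtain ⟨a, ha, ho⟩ := h
  obtain ⟨c, hc, hm⟩ := Finset.exists_min_image (s.filter Even) id
    ⟨a, Finset.mem_filter.2 ⟨ha, ho⟩⟩
  rw [Finset.mem_filter] at hc
  exact ⟨c, hc.1, hc.2, fun b hb hbo => hm b (Finset.mem_filter.2 ⟨hb, hbo⟩)⟩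

lemma swap_card {s : Finset ℕ} {a b : ℕ} (ha : a ∈ s) (hb : b ∉ s) :
    (insert b (s.erase a)).card = s.card := by
  rw [Finset.card_insert_of_notMem (fun h => hb (Finset.mem_of_mem_erase h)),
    Finset.card_erase_add_one ha]

lemma swap_sum {s : Finset ℕ} {a b : ℕ} (ha : a ∈ s) (hb : b ∉ s) :
    ∑ x ∈ insert b (s.erase a), x + a = ∑ x ∈ s, x + b := by
  rw [Finset.sum_insert (fun h => hb (Finset.mem_of_mem_erase h)),
    ← Finset.sum_erase_add s (fun x => x) ha]
  ring

lemma swap_swap {s : Finset ℕ} {a b : ℕ} (ha : a ∈ s) (hb : b ∉ s) :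
    insert a ((insert b (s.erase a)).erase b) = s := by
  rw [Finset.erase_insert (fun h => hb (Finset.mem_of_mem_erase h)), Finset.insert_erase ha]

open Classical in
lemma bij_main (m N : ℕ) :
    ((UU (N + 1)).filter (fun s => 0 ∉ s ∧ s.card = m ∧ OddSep s ∧ ∃ a ∈ s, Odd a)).card =
    ((UU N).filter (fun s => s.card = m ∧ OddSep s ∧ ∃ a ∈ s, Even a)).card := by
  have key1 : ∀ s : Finset ℕ, 0 ∉ s → OddSep s → (∃ a ∈ s, Odd a) →
      ∃ c, 2 * c + 1 ∈ s ∧ 2 * c ∉ s ∧ topOdd s = 2 * c + 1 ∧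
        botEven (insert (2 * c) (s.erase (2 * c + 1))) = 2 * c ∧
        OddSep (insert (2 * c) (s.erase (2 * c + 1))) := by
    intro s h0 hs h
    obtain ⟨a, ha, ho, hm⟩ := exists_top h
    obtain ⟨c, rfl⟩ := ho
    refine ⟨c, ha, ?_, topOdd_eq ha (by simp) hm, botEven_eq (by simp) (by simp) ?_, ?_⟩
    · intro h2
      have := hs _ ha _ h2 (by simp) (by simp)
      omega
    · intro b hb hbe
      rw [Finset.mem_insert, Finset.mem_erase] at hb
      rcases hb with rfl | hb
      · rfl
      · have := hs _ ha _ hb.2 (by simp) hbe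
        omega
    · intro x hx y hy hxo hye
      rw [Finset.mem_insert, Finset.mem_erase] at hx hy
      rcases hx with rfl | hx
      · obtain ⟨k, hk⟩ := hxo
        omega
      rcases hy with rfl | hy
      · have := hm x hx.2 hxo
        obtain ⟨k, rfl⟩ := hxo
        omega
      · exact hs x hx.2 y hy.2 hxo hye
  have key2 : ∀ s : Finset ℕ, OddSep s → (∃ a ∈ s, Even a) →
      ∃ c, 2 * c ∈ s ∧ 2 * c + 1 ∉ s ∧ botEven s = 2 * c ∧
        topOdd (insert (2 * c + 1) (s.erase (2 * c))) = 2 * c + 1 ∧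
        OddSep (insert (2 * c + 1) (s.erase (2 * c))) ∧
        0 ∉ (insert (2 * c + 1) (s.erase (2 * c))) := by
    intro s hs h
    obtain ⟨a, ha, ho, hm⟩ := exists_bot h
    obtain ⟨c, rfl⟩ := even_iff_exists_two_mul.1 ho
    refine ⟨c, ha, ?_, botEven_eq ha (by simp) hm, topOdd_eq (by simp) (by simp) ?_, ?_, ?_⟩
    · intro h2
      have := hs _ h2 _ ha (by simp) (by simp)
      omega
    · intro b hb hbe
      rw [Finset.mem_insert, Finset.mem_erase] at hb
      rcases hb with rfl | hb
      · rfl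
      · have := hs _ hb.2 _ ha hbe (by simp)
        omega
    · intro x hx y hy hxo hye
      rw [Finset.mem_insert, Finset.mem_erase] at hx hy
      rcases hy with rfl | hy
      · simp at hye
      rcases hx with rfl | hx
      · have := hm y hy.2 hye
        obtain ⟨k, rfl⟩ := hye
        omega
      · exact hs x hx.2 y hy.2 hxo hye
    · intro h0
      rw [Finset.mem_insert, Finset.mem_erase] at h0
      rcases h0 with h0 | h0
      · omega
      · have := hm 0 h0.2 (by simp)
        omega
  refine Finset.card_bij' (fun s _ => insert (topOdd s - 1) (s.erase (topOdd s)))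
    (fun s _ => insert (botEven s + 1) (s.erase (botEven s))) ?_ ?_ ?_ ?_
  · intro s hs
    rw [Finset.mem_filter, mem_UU] at hs
    obtain ⟨hsum, h0, hc, hsep, hex⟩ := hs
    obtain ⟨c, k1, k2, k3, k4, k5⟩ := key1 s h0 hsep hex
    simp only [k3, Nat.add_sub_cancel]
    rw [Finset.mem_filter, mem_UU]
    refine ⟨?_, (swap_card k1 k2).trans hc, k5, 2 * c, by simp, by simp⟩
    have := swap_sum k1 k2
    omega
  · intro s hs
    rw [Finset.mem_filter, mem_UU] at hs
    obtain ⟨hsum, hc, hsep, hex⟩ := hs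
    obtain ⟨c, k1, k2, k3, k4, k5, k6⟩ := key2 s hsep hex
    simp only [k3]
    rw [Finset.mem_filter, mem_UU]
    refine ⟨?_, k6, (swap_card k1 k2).trans hc, k5, 2 * c + 1, by simp, by simp⟩
    have := swap_sum k1 k2
    omega
  · intro s hs
    rw [Finset.mem_filter, mem_UU] at hs
    obtain ⟨hsum, h0, hc, hsep, hex⟩ := hs
    obtain ⟨c, k1, k2, k3, k4, k5⟩ := key1 s h0 hsep hex
    simp only [k3, Nat.add_sub_cancel, k4]
    exact swap_swap k1 k2
  · intro s hs
    rw [Finset.mem_filter, mem_UU] at hs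
    obtain ⟨hsum, hc, hsep, hex⟩ := hs
    obtain ⟨c, k1, k2, k3, k4, k5, k6⟩ := key2 s hsep hex
    simp only [k3, k4, Nat.add_sub_cancel]
    exact swap_swap k1 k2

open Classical in
lemma bij_zero (m N : ℕ) :
    ((UU N).filter (fun s => 0 ∈ s ∧ s.card = m + 1 ∧ OddSep s ∧ ∃ a ∈ s, Even a)).card =
    ((UU N).filter (fun s => 0 ∉ s ∧ s.card = m ∧ ∀ a ∈ s, Even a)).card := by
  refine Finset.card_bij' (fun s _ => s.erase 0) (fun s _ => insert 0 s) ?_ ?_ ?_ ?_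
  · intro s hs
    rw [Finset.mem_filter, mem_UU] at hs ⊢
    obtain ⟨hsum, h0, hc, hsep, hex⟩ := hs
    refine ⟨?_, by simp, ?_, ?_⟩
    · rw [← hsum, ← Finset.sum_erase_add s (fun x => x) h0, add_zero]
    · rw [Finset.card_erase_of_mem h0, hc, Nat.add_sub_cancel]
    · intro a ha
      rw [Finset.mem_erase] at ha
      by_contra hne
      have := hsep a ha.2 0 h0 (Nat.not_even_iff_odd.1 hne) (by simp)
      omega
  · intro s hs
    rw [Finset.mem_filter, mem_UU] at hs ⊢
    obtain ⟨hsum, h0, hc, hev⟩ := hs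
    refine ⟨?_, by simp, ?_, ?_, 0, by simp, by simp⟩
    · rw [Finset.sum_insert h0, hsum, zero_add]
    · rw [Finset.card_insert_of_notMem h0, hc]
    · intro x hx y hy hxo hye
      rw [Finset.mem_insert] at hx
      rcases hx with rfl | hx
      · obtain ⟨k, hk⟩ := hxo
        omega
      · exact absurd (hev x hx) (Nat.not_even_iff_odd.2 hxo)
  · intro s hs
    rw [Finset.mem_filter] at hs
    exact Finset.insert_erase hs.2.1
  · intro s hs
    rw [Finset.mem_filter] at hs
    exact Finset.erase_insert hs.2.1

open Classical in
lemma split_odd (m N : ℕ) :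
    ((UU N).filter (fun s => 0 ∉ s ∧ s.card = m ∧ OddSep s)).card =
    ((UU N).filter (fun s => 0 ∉ s ∧ s.card = m ∧ OddSep s ∧ ∃ a ∈ s, Even a)).card +
    ((UU N).filter (fun s => 0 ∉ s ∧ s.card = m ∧ ∀ a ∈ s, Odd a)).card := by
  rw [← Finset.card_filter_add_card_filter_not (fun s => ∃ a ∈ s, Even a),
    Finset.filter_filter, Finset.filter_filter]
  congr 2
  · ext s
    simp only [Finset.mem_filter]
    tauto
  · ext s
    simp only [Finset.mem_filter, not_exists, not_and, Nat.not_even_iff_odd]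
    constructor
    · tauto
    · rintro ⟨h, h0, hc, ho⟩
      exact ⟨h, ⟨h0, hc, fun x _ y hy _ hye =>
        absurd hye (Nat.not_even_iff_odd.2 (ho y hy))⟩, ho⟩

open Classical in
lemma split_even (m N : ℕ) :
    ((UU N).filter (fun s => 0 ∉ s ∧ s.card = m ∧ OddSep s)).card =
    ((UU N).filter (fun s => 0 ∉ s ∧ s.card = m ∧ OddSep s ∧ ∃ a ∈ s, Odd a)).card +
    ((UU N).filter (fun s => 0 ∉ s ∧ s.card = m ∧ ∀ a ∈ s, Even a)).card := by
  rw [← Finset.card_filter_add_card_filter_not (fun s => ∃ a ∈ s, Odd a),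
    Finset.filter_filter, Finset.filter_filter]
  congr 2
  · ext s
    simp only [Finset.mem_filter]
    tauto
  · ext s
    simp only [Finset.mem_filter, not_exists, not_and, Nat.not_odd_iff_even]
    constructor
    · tauto
    · rintro ⟨h, h0, hc, ho⟩
      exact ⟨h, ⟨h0, hc, fun x hx y _ hxo _ =>
        absurd hxo (Nat.not_odd_iff_even.2 (ho x hx))⟩, ho⟩

open Classical in
lemma split_zero (m N : ℕ) :
    ((UU N).filter (fun s => s.card = m ∧ OddSep s ∧ ∃ a ∈ s, Even a)).card =
    ((UU N).filter (fun s => 0 ∈ s ∧ s.card = m ∧ OddSep s ∧ ∃ a ∈ s, Even a)).card +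
    ((UU N).filter (fun s => 0 ∉ s ∧ s.card = m ∧ OddSep s ∧ ∃ a ∈ s, Even a)).card := by
  rw [← Finset.card_filter_add_card_filter_not (fun s => 0 ∈ s),
    Finset.filter_filter, Finset.filter_filter]
  congr 2
  · ext s
    simp only [Finset.mem_filter]
    tauto
  · ext s
    simp only [Finset.mem_filter]
    tauto

open Classical in
lemma pedOd_eq (m n : ℕ) : pedOd m n =
    ((UU n).filter (fun s => 0 ∉ s ∧ s.card = m ∧ OddSep s ∧ ∃ a ∈ s, Odd a)).card := by
  refine (card_part n m (fun M => (∀ a, M a → ∀ b, M b → Odd a → Even b → a < b) ∧ ∃ a, M a ∧ Odd a)).trans ?_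
  congr

open Classical in
lemma Dodd_eq (m n : ℕ) : Dodd m n =
    ((UU n).filter (fun s => 0 ∉ s ∧ s.card = m ∧ ∀ a ∈ s, Odd a)).card := by
  refine (card_part n m (fun M => ∀ a, M a → Odd a)).trans ?_
  congr

open Classical in
lemma Deven_eq (m n : ℕ) : Deven m n =
    ((UU n).filter (fun s => 0 ∉ s ∧ s.card = m ∧ ∀ a ∈ s, Even a)).card := by
  refine (card_part n m (fun M => ∀ a, M a → Even a)).trans ?_
  congr

theorem pedOd_diff (m n : ℕ) (hm : 1 ≤ m) (hn : 1 ≤ n) :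
    (pedOd m n : ℤ) - (pedOd m (n - 1) : ℤ)
      = (Deven m (n - 1) : ℤ) + (Deven (m - 1) (n - 1) : ℤ) - (Dodd m (n - 1) : ℤ) := by
  classical
  obtain ⟨N, rfl⟩ : ∃ N, n = N + 1 := ⟨n - 1, by omega⟩
  obtain ⟨k, rfl⟩ : ∃ k, m = k + 1 := ⟨m - 1, by omega⟩
  simp only [Nat.add_sub_cancel]
  have h1 := bij_main (k + 1) N
  have h2 := bij_zero k N
  have h3 := split_odd (k + 1) N
  have h4 := split_even (k + 1) N
  have h5 := split_zero (k + 1) N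
  rw [← pedOd_eq] at h1 h4
  rw [← Deven_eq] at h2 h4
  rw [← Dodd_eq] at h3
  omega
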